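/- (Fairness-aware Bayes-optimal classifier.) Let μ be a probability measure on a measurable space 𝓧 and let η, η̄, η* : 𝓧 → [0, 1] be measurable with π = ∫ η dμ, π̄ = ∫ η̄ dμ, π* = ∫ η* dμ each in (0, 1). Let c, c̄, c* ∈ (0, 1), λ_fair, λ_ratio ∈ ℝ, and define CS(g; η, c) = (1 − c)π + ∫ (c − η) g dμ (analogously for η̄, η*), the Lagrangian risk R_CS(g) = CS(g; η, c) − λ_fair·CS(g; η̄, c̄) − λ_ratio·CS(g; η*, c*), and s*(x) = (η(x) − c) − λ_fair(η̄(x) − c̄) − λ_ratio(η*(x) − c*). Then for every α ∈ [0, 1], the classifier g_opt = H_α ∘ s*, where H_α(z) = 1_{z > 0} + α·1_{z = 0}, minimizes R_CS over all measurable g : 𝓧 → [0, 1]; that is, R_CS(H_α ∘ s*) ≤ R_CS(g) for all measurable g : 𝓧 → [0, 1]. -/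

import Mathlib

open MeasureTheory

/-- Cost-sensitive risk `CS(g; η, c) = (1 − c)π + ∫ (c − η)g dμ`,
with base rate `π` given explicitly as a parameter. -/
noncomputable def CSrisk {X : Type*} [MeasurableSpace X] (μ : Measure X)
    (η : X → ℝ) (c π : ℝ) (g : X → ℝ) : ℝ :=
  (1 - c) * π + ∫ x, (c - η x) * g x ∂μ

/-- Lagrangian risk
`R_CS(g) = CS(g; η, c) − λ_fair·CS(g; η̄, c̄) − λ_ratio·CS(g; η*, c*)`. -/
noncomputable def RCS {X : Type*} [MeasurableSpace X] (μ : Measure X)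
    (η ηbar ηstar : X → ℝ) (c cbar cstar π πbar πstar lamFair lamRatio : ℝ)
    (g : X → ℝ) : ℝ :=
  CSrisk μ η c π g - lamFair * CSrisk μ ηbar cbar πbar g
    - lamRatio * CSrisk μ ηstar cstar πstar g

/-! Up to the risk of the zero classifier, the Lagrangian risk is the linear functional
`g ↦ -∫ s* · g`. Pointwise `z * t ≤ max z 0` for `t ∈ [0, 1]`, with equality at `t = H_α(z)`;
the value of `H_α` at `0` is irrelevant because it is multiplied by `z = 0`. -/

/-- The modified Heaviside function `H_α`, the threshold at `0` that takes the value `α` on ties. -/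
noncomputable def modifiedHeaviside (α z : ℝ) : ℝ :=
  (if 0 < z then 1 else 0) + α * (if z = 0 then 1 else 0)

/-- The score `s*` whose sign decides the fairness-aware classification; it is minus the density
of the Lagrangian risk as a functional of the classifier. -/
def lagrangianScore {X : Type*} (η ηbar ηstar : X → ℝ)
    (c cbar cstar lamFair lamRatio : ℝ) (x : X) : ℝ :=
  (η x - c) - lamFair * (ηbar x - cbar) - lamRatio * (ηstar x - cstar)

theorem mul_modifiedHeaviside (α z : ℝ) : z * modifiedHeaviside α z = max z 0 := by
  rcases lt_trichotomy z 0 with hneg | rfl | hpos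
  · simp [modifiedHeaviside, hneg.not_gt, hneg.ne, hneg.le]
  · simp
  · simp [modifiedHeaviside, hpos, hpos.ne', hpos.le]

theorem norm_modifiedHeaviside_le (α z : ℝ) : ‖modifiedHeaviside α z‖ ≤ max 1 |α| := by
  rcases lt_trichotomy z 0 with hneg | rfl | hpos
  · simp [modifiedHeaviside, hneg.not_gt, hneg.ne]
  · simp [modifiedHeaviside]
  · simp [modifiedHeaviside, hpos, hpos.ne']

theorem measurable_modifiedHeaviside (α : ℝ) : Measurable (modifiedHeaviside α) :=
  (Measurable.ite measurableSet_Ioi measurable_const measurable_const).add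
    ((Measurable.ite (measurableSet_singleton 0) measurable_const measurable_const).const_mul α)

theorem mul_le_max_zero_of_mem_Icc {z t : ℝ} (ht : t ∈ Set.Icc (0 : ℝ) 1) : z * t ≤ max z 0 :=
  calc
    z * t ≤ max z 0 * t := mul_le_mul_of_nonneg_right (le_max_left z 0) ht.1
    _ ≤ max z 0 := mul_le_of_le_one_right (le_max_right z 0) ht.2

section

variable {X : Type*} [MeasurableSpace X] {μ : Measure X}

theorem integral_mul_le_integral_mul_modifiedHeaviside {s g : X → ℝ} (α : ℝ)
    (hs : Integrable s μ) (hsg : Integrable (fun x => s x * g x) μ)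
    (hg01 : ∀ᵐ x ∂μ, g x ∈ Set.Icc (0 : ℝ) 1) :
    ∫ x, s x * g x ∂μ ≤ ∫ x, s x * modifiedHeaviside α (s x) ∂μ := by
  simp only [mul_modifiedHeaviside]
  exact integral_mono_ae hsg hs.pos_part (hg01.mono fun _ hx => mul_le_max_zero_of_mem_Icc hx)

variable [IsFiniteMeasure μ] {η ηbar ηstar : X → ℝ}

theorem integrable_lagrangianScore (hη : Integrable η μ) (hηbar : Integrable ηbar μ)
    (hηstar : Integrable ηstar μ) (c cbar cstar lamFair lamRatio : ℝ) :
    Integrable (lagrangianScore η ηbar ηstar c cbar cstar lamFair lamRatio) μ :=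
  ((hη.sub (integrable_const c)).sub ((hηbar.sub (integrable_const cbar)).const_mul lamFair)).sub
    ((hηstar.sub (integrable_const cstar)).const_mul lamRatio)

theorem RCS_eq_RCS_zero_sub_integral (hη : Integrable η μ) (hηbar : Integrable ηbar μ)
    (hηstar : Integrable ηstar μ) {c cbar cstar π πbar πstar lamFair lamRatio : ℝ}
    {g : X → ℝ} {C : ℝ} (hg : AEStronglyMeasurable g μ) (hgC : ∀ᵐ x ∂μ, ‖g x‖ ≤ C) :
    RCS μ η ηbar ηstar c cbar cstar π πbar πstar lamFair lamRatio g =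
      RCS μ η ηbar ηstar c cbar cstar π πbar πstar lamFair lamRatio 0 -
        ∫ x, lagrangianScore η ηbar ηstar c cbar cstar lamFair lamRatio x * g x ∂μ := by
  have integrable_cost {ζ : X → ℝ} (hζ : Integrable ζ μ) (d : ℝ) :
      Integrable (fun x => (d - ζ x) * g x) μ :=
    ((integrable_const d).sub hζ).mul_bdd hg hgC
  have hcost := integrable_cost hη c
  have hcost_bar := (integrable_cost hηbar cbar).const_mul lamFair
  have hcost_sub : Integrable
      (fun x => (c - η x) * g x - lamFair * ((cbar - ηbar x) * g x)) μ := hcost.sub hcost_bar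
  have hcost_star := (integrable_cost hηstar cstar).const_mul lamRatio
  have score_integral :
      ∫ x, lagrangianScore η ηbar ηstar c cbar cstar lamFair lamRatio x * g x ∂μ =
        -(∫ x, (c - η x) * g x ∂μ - lamFair * ∫ x, (cbar - ηbar x) * g x ∂μ -
          lamRatio * ∫ x, (cstar - ηstar x) * g x ∂μ) := by
    rw [← integral_const_mul, ← integral_const_mul, ← integral_sub hcost hcost_bar,
      ← integral_sub hcost_sub hcost_star, ← integral_neg]
    congr with x
    simp only [lagrangianScore]
    ring
  simp only [score_integral, RCS, CSrisk, Pi.zero_apply, mul_zero, integral_zero]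
  ring

theorem fairness_aware_bayes_optimal_general (hη : Integrable η μ) (hηbar : Integrable ηbar μ)
    (hηstar : Integrable ηstar μ) (c cbar cstar lamFair lamRatio α : ℝ)
    {g : X → ℝ} (hg : AEStronglyMeasurable g μ) (hg01 : ∀ᵐ x ∂μ, g x ∈ Set.Icc (0 : ℝ) 1) :
    RCS μ η ηbar ηstar c cbar cstar (∫ x, η x ∂μ) (∫ x, ηbar x ∂μ) (∫ x, ηstar x ∂μ)
        lamFair lamRatio
        (fun x => modifiedHeaviside α
          (lagrangianScore η ηbar ηstar c cbar cstar lamFair lamRatio x))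
      ≤ RCS μ η ηbar ηstar c cbar cstar (∫ x, η x ∂μ) (∫ x, ηbar x ∂μ) (∫ x, ηstar x ∂μ)
        lamFair lamRatio g := by
  have hs := integrable_lagrangianScore hη hηbar hηstar c cbar cstar lamFair lamRatio
  have hH : AEStronglyMeasurable (fun x => modifiedHeaviside α
      (lagrangianScore η ηbar ηstar c cbar cstar lamFair lamRatio x)) μ :=
    ((measurable_modifiedHeaviside α).comp_aemeasurable hs.aemeasurable).aestronglyMeasurable
  have hg_norm : ∀ᵐ x ∂μ, ‖g x‖ ≤ 1 := hg01.mono fun x hx =>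
    (Real.norm_of_nonneg hx.1).trans_le hx.2
  rw [RCS_eq_RCS_zero_sub_integral hη hηbar hηstar hH
      (ae_of_all μ fun _ => norm_modifiedHeaviside_le α _),
    RCS_eq_RCS_zero_sub_integral hη hηbar hηstar hg hg_norm]
  exact sub_le_sub_left
    (integral_mul_le_integral_mul_modifiedHeaviside α hs (hs.mul_bdd hg hg_norm) hg01) _

end

/-- Fairness-aware Bayes-optimal classifier (Proposition 4.2): for every
`α ∈ [0, 1]`, the classifier `H_α ∘ s*`, with
`H_α(z) = 1_{z > 0} + α·1_{z = 0}` and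
`s*(x) = (η(x) − c) − λ_fair(η̄(x) − c̄) − λ_ratio(η*(x) − c*)`,
minimizes the Lagrangian risk `R_CS` over all measurable `g : X → [0, 1]`. -/
theorem fairness_aware_bayes_optimal
    {X : Type*} [MeasurableSpace X] (μ : Measure X) [IsProbabilityMeasure μ]
    (η ηbar ηstar : X → ℝ)
    (hη : Measurable η) (hη01 : ∀ x, η x ∈ Set.Icc (0 : ℝ) 1)
    (hηbar : Measurable ηbar) (hηbar01 : ∀ x, ηbar x ∈ Set.Icc (0 : ℝ) 1)
    (hηstar : Measurable ηstar) (hηstar01 : ∀ x, ηstar x ∈ Set.Icc (0 : ℝ) 1)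
    (c cbar cstar : ℝ) (hc : c ∈ Set.Ioo (0 : ℝ) 1)
    (hcbar : cbar ∈ Set.Ioo (0 : ℝ) 1) (hcstar : cstar ∈ Set.Ioo (0 : ℝ) 1)
    (lamFair lamRatio : ℝ)
    (π πbar πstar : ℝ)
    (hπ : π = ∫ x, η x ∂μ) (hπbar : πbar = ∫ x, ηbar x ∂μ)
    (hπstar : πstar = ∫ x, ηstar x ∂μ)
    (hπ01 : π ∈ Set.Ioo (0 : ℝ) 1) (hπbar01 : πbar ∈ Set.Ioo (0 : ℝ) 1)
    (hπstar01 : πstar ∈ Set.Ioo (0 : ℝ) 1)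
    (sstar : X → ℝ)
    (hs : ∀ x, sstar x =
      (η x - c) - lamFair * (ηbar x - cbar) - lamRatio * (ηstar x - cstar))
    (α : ℝ) (hα : α ∈ Set.Icc (0 : ℝ) 1)
    (H : ℝ → ℝ)
    (hH : ∀ z, H z = (if 0 < z then (1 : ℝ) else 0) +
      α * (if z = 0 then (1 : ℝ) else 0)) :
    ∀ g : X → ℝ, Measurable g → (∀ x, g x ∈ Set.Icc (0 : ℝ) 1) →
      RCS μ η ηbar ηstar c cbar cstar π πbar πstar lamFair lamRatio
          (fun x => H (sstar x))
        ≤ RCS μ η ηbar ηstar c cbar cstar π πbar πstar lamFair lamRatio g := by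
  intro g hg hg01
  obtain rfl : H = modifiedHeaviside α := funext hH
  obtain rfl : sstar = lagrangianScore η ηbar ηstar c cbar cstar lamFair lamRatio := funext hs
  subst hπ hπbar hπstar
  exact fairness_aware_bayes_optimal_general
    (.of_mem_Icc 0 1 hη.aemeasurable (ae_of_all μ hη01))
    (.of_mem_Icc 0 1 hηbar.aemeasurable (ae_of_all μ hηbar01))
    (.of_mem_Icc 0 1 hηstar.aemeasurable (ae_of_all μ hηstar01))
    c cbar cstar lamFair lamRatio α hg.aestronglyMeasurable (ae_of_all μ hg01)
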